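/- arXiv:1503.03974 — 2 statements merged into one kernel-verified Lean document; each statement's English description precedes it below -/
import Mathlib

section
/- Let G = (V, A) be a finite directed graph without loops or parallel arcs in which every arc (u, v) carries an integer weight w(u, v). If G is conservative (every directed cycle has nonnegative total weight), then G admits an integer-valued feasible potential, i.e., a function p : V → ℤ with w(u, v) − p(v) + p(u) ≥ 0 for every arc (u, v). -/
/-!
The potential at `u` is minus the infimum `q u` of the weights of the finitely many simple directed
paths starting at `u`. Feasibility is the inequality `q u ≤ w u v + q v` for every arc `(u, v)`:
prefix the arc to a simple path from `v`. The result is again simple unless the path visits `u`; in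
that case the part up to that visit is a cycle, whose weight is nonnegative, and the part after it
is a simple path from `u`.
-/

section Paths

variable {V R : Type*}

/-- The nodes visited after `u` by the simple directed paths starting at `u`; thus `l` stands for
the path with node sequence `u :: l`, and `[]` for the empty path. -/
def simplePathsFrom (A : Set (V × V)) (u : V) : Set (List V) :=
  {l | (u :: l).Nodup ∧ (u :: l).IsChain fun x y => (x, y) ∈ A}

/-- The total arc weight of the walk with node sequence `u :: l`. -/
def walkWeight [AddMonoid R] (w : V → V → R) (u : V) (l : List V) : R :=
  ((u :: l).zipWith w l).sum

/-- No cycle has negative weight. A cycle with `ℓ + 1` arcs is encoded by its nodes in cyclic order,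
which are required to be distinct; the addition of `Fin (ℓ + 1)` wraps around. -/
def IsConservative [AddCommMonoid R] [LE R] (A : Set (V × V)) (w : V → V → R) : Prop :=
  ∀ (ℓ : ℕ) (c : Fin (ℓ + 1) → V), Function.Injective c →
    (∀ i, (c i, c (i + 1)) ∈ A) → 0 ≤ ∑ i, w (c i) (c (i + 1))

variable {A : Set (V × V)} {w : V → V → R} {u v : V} {l : List V}

lemma nil_mem_simplePathsFrom : [] ∈ simplePathsFrom A u :=
  ⟨List.nodup_singleton u, List.isChain_singleton u⟩

lemma reachable_of_mem_simplePathsFrom (hl : l ∈ simplePathsFrom A u) :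
    ∀ x ∈ l, Relation.ReflTransGen (fun x y => (x, y) ∈ A) u x := fun x hx =>
  hl.2.cons_induction _ l (fun _ _ hxy hux => hux.tail hxy) .refl x hx

lemma finite_simplePathsFrom
    (hu : {x | Relation.ReflTransGen (fun x y => (x, y) ∈ A) u x}.Finite) :
    (simplePathsFrom A u).Finite := by
  set S := {x | Relation.ReflTransGen (fun x y => (x, y) ∈ A) u x}
  have := hu.fintype
  refine (Set.finite_range fun m : {m : List S // m.Nodup} => m.1.map (↑)).subset fun l hl => ?_
  lift l to List S using reachable_of_mem_simplePathsFrom hl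
  exact ⟨⟨l, hl.1.of_cons.of_map _⟩, rfl⟩

lemma walkWeight_cons [AddMonoid R] : walkWeight w u (v :: l) = w u v + walkWeight w v l := by
  simp [walkWeight]

lemma walkWeight_append_cons [AddMonoid R] (s t : List V) :
    walkWeight w u (s ++ v :: t) = walkWeight w u (s ++ [v]) + walkWeight w v t := by
  induction s generalizing u with
  | nil => simp [walkWeight]
  | cons x s ih => simp only [List.cons_append, walkWeight_cons, ih, add_assoc]

lemma walkWeight_eq_sum [AddCommMonoid R] :
    walkWeight w u l = ∑ i : Fin l.length, w (u :: l)[i] l[i] := by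
  induction l generalizing u with
  | nil => simp [walkWeight]
  | cons v l ih => simp [walkWeight_cons, ih, Fin.sum_univ_succ]

lemma getElem_append_singleton_eq_getElem_cons (i : Fin (l.length + 1)) :
    (l ++ [u])[i.val]'(by grind) = (u :: l)[(i + 1).val] := by
  induction i using Fin.lastCases with
  | last => simp
  | cast i => simp

lemma walkWeight_append_singleton_self [AddCommMonoid R] :
    walkWeight w u (l ++ [u]) = ∑ i : Fin (l.length + 1), w (u :: l)[i] (u :: l)[i + 1] := by
  rw [walkWeight_eq_sum]
  refine Fintype.sum_equiv (finCongr (by simp)) _ _ fun i => ?_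
  have hi : i.val < (u :: l).length := by grind
  have htail : (u :: (l ++ [u]))[i.val] = (u :: l)[i.val] :=
    List.getElem_append_left (as := u :: l) hi
  exact congrArg₂ w htail (getElem_append_singleton_eq_getElem_cons ⟨i.val, hi⟩)

lemma IsConservative.walkWeight_nonneg [AddCommMonoid R] [LE R] (hcons : IsConservative A w)
    (hnodup : (u :: l).Nodup) (hchain : (u :: (l ++ [u])).IsChain fun x y => (x, y) ∈ A) :
    0 ≤ walkWeight w u (l ++ [u]) := by
  rw [walkWeight_append_singleton_self]
  refine hcons l.length (fun i => (u :: l)[i]) hnodup.injective_get fun i => ?_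
  have harc := List.isChain_iff_getElem.1 hchain i.val (by grind)
  have htail : (u :: (l ++ [u]))[i.val]'(by grind) = (u :: l)[i.val] :=
    List.getElem_append_left (as := u :: l) i.isLt
  rwa [htail, List.getElem_cons_succ, getElem_append_singleton_eq_getElem_cons] at harc

lemma IsConservative.exists_walkWeight_le [AddCommMonoid R] [Preorder R] [AddRightMono R]
    (hcons : IsConservative A w) (huv : (u, v) ∈ A) (hl : l ∈ simplePathsFrom A v) :
    ∃ l' ∈ simplePathsFrom A u, walkWeight w u l' ≤ w u v + walkWeight w v l := by
  obtain ⟨hnodup, hchain⟩ := hl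
  have hchain' : (u :: v :: l).IsChain fun x y => (x, y) ∈ A := hchain.cons_cons huv
  by_cases hu : u ∈ v :: l
  · obtain ⟨s, t, hst⟩ := List.append_of_mem hu
    rw [← walkWeight_cons, hst, walkWeight_append_cons]
    rw [hst] at hnodup hchain'
    have hcycle := List.isChain_cons_split.1 hchain'
    have hs : (u :: s).Nodup := (List.nodup_middle.1 hnodup).sublist (by simp)
    exact ⟨t, ⟨hnodup.of_append_right, hcycle.2⟩,
      le_add_of_nonneg_left (hcons.walkWeight_nonneg hs hcycle.1)⟩
  · exact ⟨v :: l, ⟨hnodup.cons hu, hchain'⟩, walkWeight_cons.le⟩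

end Paths

lemma exists_isGLB_of_finite {α : Type*} [SemilatticeInf α] {s : Set α} (hs : s.Finite)
    (hne : s.Nonempty) : ∃ a, IsGLB s a := by
  lift s to Finset α using hs
  exact ⟨s.inf' hne id, fun _ hx => s.inf'_le id hx,
    fun _ hb => Finset.le_inf' hne id fun _ hx => hb hx⟩

theorem stmt_1_general {V R : Type*} [AddCommGroup R] [Lattice R] [IsOrderedAddMonoid R]
    (A : Set (V × V)) (w : V → V → R)
    (hfin : ∀ u, {v | Relation.ReflTransGen (fun x y => (x, y) ∈ A) u v}.Finite)
    (hcons : IsConservative A w) :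
    ∃ p : V → R, ∀ a ∈ A, 0 ≤ w a.1 a.2 - p a.2 + p a.1 := by
  have hglb (u : V) : ∃ q, IsGLB (walkWeight w u '' simplePathsFrom A u) q :=
    exists_isGLB_of_finite ((finite_simplePathsFrom (hfin u)).image _)
      ⟨_, [], nil_mem_simplePathsFrom, rfl⟩
  choose q hq using hglb
  have hq_le {u v : V} (huv : (u, v) ∈ A) : q u - w u v ≤ q v := by
    refine (hq v).2 ?_
    rintro _ ⟨l, hl, rfl⟩
    obtain ⟨l', hl', hle⟩ := hcons.exists_walkWeight_le huv hl
    exact sub_le_iff_le_add'.2 (((hq u).1 ⟨l', hl', rfl⟩).trans hle)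
  refine ⟨fun u => -q u, fun ⟨u, v⟩ huv => ?_⟩
  simpa [← sub_eq_add_neg, add_comm] using hq_le huv

/-- A finite weighted directed graph without loops or parallel arcs, with
integer arc weights, which is conservative (every directed cycle, encoded as a
cyclic sequence `c : ZMod (ℓ+1) → V` of nodes whose consecutive pairs are all
arcs, has nonnegative total weight) admits an integer-valued feasible
potential `p : V → ℤ` with `w(u,v) - p(v) + p(u) ≥ 0` for every arc `(u,v)`. -/
theorem stmt_1 {V : Type*} [Fintype V] (A : Set (V × V))
    (hloop : ∀ a ∈ A, a.1 ≠ a.2) (w : V → V → ℤ)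
    (hcons : ∀ (ℓ : ℕ) (c : ZMod (ℓ + 1) → V),
      (∀ i, (c i, c (i + 1)) ∈ A) → 0 ≤ ∑ i, w (c i) (c (i + 1))) :
    ∃ p : V → ℤ, ∀ a ∈ A, 0 ≤ w a.1 a.2 - p a.2 + p a.1 := by
  -- `ZMod (ℓ + 1)` unfolds to `Fin (ℓ + 1)`.
  exact stmt_1_general A w (fun _ => Set.toFinite _) fun ℓ c _ => hcons ℓ c
end

section
/- A multi-head HyTN H = (V, A) with integer weights, in which every node is the tail of at least one hyperarc, admits an integral feasible scheduling s : V → ℤ if and only if it is conservative (contains no negative cycle). -/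
/-!
If `s` is feasible, the arc of each node `x` of a cycle `(S, C)` has a head `u`, of weight `w`, with
`s u - w ≤ s x`. Iterating the choice of such a head runs into a cyclic sequence, along which these
inequalities telescope to a nonnegative total weight; hence a feasible network is conservative.

Conversely, if two arcs `i ≠ j` share a tail `x`, and `s₁`, `s₂` are feasible without `i`,
respectively without `j`, then the pointwise minimum of `s₁ - s₁ x` and `s₂ - s₂ x` is feasible for
both. This reduces the problem to networks with at most one arc per tail. There, arbitrary values
outside a finite set `U` of tails extend to `U`: either some node of `U` has a head outside `U`,
which determines a value for it, or `U` is closed under heads, and then it contains a cyclic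
sequence of nonnegative weight, on which the partial sums of the weights are suitable values.
-/

lemma exists_iterate_mem_periodicPts {α : Type*} [Finite α] (f : α → α) (x : α) :
    ∃ m, f^[m] x ∈ Function.periodicPts f := by
  obtain ⟨m, n, hmn, heq⟩ : ∃ m n, m < n ∧ f^[m] x = f^[n] x :=
    Set.finite_univ.exists_lt_map_eq_of_forall_mem fun _ => Set.mem_univ _
  refine ⟨m, Function.mk_mem_periodicPts (Nat.sub_pos_of_lt hmn) ?_⟩
  rw [Function.IsPeriodicPt, Function.IsFixedPt, ← Function.iterate_add_apply,
    Nat.sub_add_cancel hmn.le, heq]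

/-- A multi-head hyper temporal network with nodes `V`, hyperarcs indexed by `ι` and weights in `R`.
A head set may be empty, in which case no scheduling satisfies the hyperarc, and may contain the
tail. The function `weight i` is only meaningful on `heads i`. -/
structure HyTN (V ι R : Type*) where
  tail : ι → V
  heads : ι → Finset V
  weight : ι → V → R

namespace HyTN

variable {V ι R : Type*}

/-- The scheduling `s` satisfies the hyperarc `i`: the minimum of `s u - weight i u` over its heads
`u` is at most the value at its tail. The bound on the minimum is expressed by a witness. -/
def Satisfies [LE R] [Sub R] (H : HyTN V ι R) (s : V → R) (i : ι) : Prop :=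
  ∃ u ∈ H.heads i, s u - H.weight i u ≤ s (H.tail i)

/-- The nodes `v 0, …, v p` form a cyclic sequence starting in `S`, each a head of the arc which `a`
selects at its predecessor, and only `v p = v 0` is repeated. -/
def IsCyclicSeq (H : HyTN V ι R) (S : Set V) (a : V → ι) (p : ℕ) (v : ℕ → V) : Prop :=
  1 ≤ p ∧ v 0 ∈ S ∧ (∀ t < p, v (t + 1) ∈ H.heads (a (v t))) ∧ v p = v 0 ∧
    ∀ t < p, ∀ t' < p, v t = v t' → t = t'

/-- The total weight of the first `n` steps of the sequence `v` along the arcs selected by `a`. -/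
def seqWeight [AddCommMonoid R] (H : HyTN V ι R) (a : V → ι) (v : ℕ → V) (n : ℕ) : R :=
  ∑ t ∈ Finset.range n, H.weight (a (v t)) (v (t + 1))

/-- `(S, C)` is a cycle of the network, `a v` is the only arc of `C` with tail `v ∈ S`, and all its
cyclic sequences have negative weight. The values of `a` outside `S` are irrelevant. -/
def IsNegativeCycle [AddCommMonoid R] [LT R] (H : HyTN V ι R) (S : Set V) (C : Set ι)
    (a : V → ι) : Prop :=
  S.Nonempty ∧
  (∀ v, v ∈ S ↔ ∃ i ∈ C, v = H.tail i ∨ v ∈ H.heads i) ∧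
  (∀ v ∈ S, a v ∈ C ∧ H.tail (a v) = v) ∧
  (∀ i ∈ C, a (H.tail i) = i) ∧
  ∀ p v, H.IsCyclicSeq S a p v → H.seqWeight a v p < 0

/-- A network is conservative if it has no negative cycle. -/
def IsConservative [AddCommMonoid R] [LT R] (H : HyTN V ι R) : Prop :=
  ¬ ∃ S C a, H.IsNegativeCycle S C a

variable {H : HyTN V ι R} {S : Set V} {C : Set ι} {a : V → ι} {p : ℕ} {v : ℕ → V}
  {s s₁ s₂ : V → R} {i : ι}

lemma IsCyclicSeq.mem_of_le (hv : H.IsCyclicSeq S a p v)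
    (hS : ∀ x ∈ S, ∀ u ∈ H.heads (a x), u ∈ S) : ∀ t ≤ p, v t ∈ S := by
  obtain ⟨-, h0, hhead, -, -⟩ := hv
  intro t ht
  induction t with
  | zero => exact h0
  | succ t ih => exact hS _ (ih (by omega)) _ (hhead t ht)

lemma isNegativeCycle_image [AddCommMonoid R] [LT R] (hne : S.Nonempty)
    (ha : ∀ x ∈ S, H.tail (a x) = x) (hS : ∀ x ∈ S, ∀ u ∈ H.heads (a x), u ∈ S)
    (hneg : ∀ p v, H.IsCyclicSeq S a p v → H.seqWeight a v p < 0) :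
    H.IsNegativeCycle S (a '' S) a := by
  refine ⟨hne, fun x => ⟨fun hx => ⟨a x, ⟨x, hx, rfl⟩, Or.inl (ha x hx).symm⟩, ?_⟩,
    fun x hx => ⟨⟨x, hx, rfl⟩, ha x hx⟩, ?_, hneg⟩
  · rintro ⟨_, ⟨y, hy, rfl⟩, rfl | hx⟩
    · rwa [ha y hy]
    · exact hS y hy x hx
  · rintro _ ⟨x, hx, rfl⟩
    rw [ha x hx]

/-- The sequence is a periodic orbit of a map sending each node of `S` to a head at which its arc
is satisfied. -/
lemma exists_isCyclicSeq_of_satisfies [LE R] [Sub R] (hfin : S.Finite) (hne : S.Nonempty)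
    (ha : ∀ x ∈ S, H.tail (a x) = x) (hS : ∀ x ∈ S, ∀ u ∈ H.heads (a x), u ∈ S)
    (hs : ∀ x ∈ S, H.Satisfies s (a x)) :
    ∃ p v, H.IsCyclicSeq S a p v ∧
      ∀ t < p, s (v (t + 1)) - H.weight (a (v t)) (v (t + 1)) ≤ s (v t) := by
  have hnext : ∀ x : S, ∃ y : S, y.1 ∈ H.heads (a x) ∧ s y - H.weight (a x) y ≤ s x := by
    rintro ⟨x, hx⟩
    obtain ⟨u, hu, hle⟩ := hs x hx
    exact ⟨⟨u, hS x hx u hu⟩, hu, by rwa [ha x hx] at hle⟩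
  choose f hf_head hf_le using hnext
  have : Finite S := hfin
  obtain ⟨x, hx⟩ := hne
  obtain ⟨m, hm⟩ := exists_iterate_mem_periodicPts f ⟨x, hx⟩
  generalize f^[m] ⟨x, hx⟩ = y at hm
  refine ⟨Function.minimalPeriod f y, fun t => f^[t] y,
    ⟨Function.minimalPeriod_pos_of_mem_periodicPts hm, y.2, fun t _ => ?_, ?_, ?_⟩, fun t _ => ?_⟩
  · simp only [Function.iterate_succ_apply']
    exact hf_head _
  · exact congrArg Subtype.val Function.iterate_minimalPeriod
  · exact fun t ht t' ht' h =>
      Function.iterate_injOn_Iio_minimalPeriod ht ht' (Subtype.ext h)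
  · simp only [Function.iterate_succ_apply']
    exact hf_le _

lemma IsConservative.exists_isCyclicSeq_seqWeight_nonneg [AddCommMonoid R] [LinearOrder R]
    (hH : H.IsConservative) (hne : S.Nonempty) (ha : ∀ x ∈ S, H.tail (a x) = x)
    (hS : ∀ x ∈ S, ∀ u ∈ H.heads (a x), u ∈ S) :
    ∃ p v, H.IsCyclicSeq S a p v ∧ 0 ≤ H.seqWeight a v p := by
  by_contra! hneg
  exact hH ⟨S, a '' S, a, isNegativeCycle_image hne ha hS hneg⟩

section Preorder

variable [AddCommGroup R] [Preorder R] [IsOrderedAddMonoid R]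

lemma sub_le_seqWeight {n : ℕ}
    (hs : ∀ t < n, s (v (t + 1)) - H.weight (a (v t)) (v (t + 1)) ≤ s (v t)) :
    s (v n) - s (v 0) ≤ H.seqWeight a v n :=
  calc s (v n) - s (v 0) = ∑ t ∈ Finset.range n, (s (v (t + 1)) - s (v t)) :=
        (Finset.sum_range_sub (fun t => s (v t)) n).symm
    _ ≤ H.seqWeight a v n :=
        Finset.sum_le_sum fun t ht => sub_le_comm.mp (hs t (Finset.mem_range.mp ht))

lemma IsCyclicSeq.seqWeight_nonneg (hv : H.IsCyclicSeq S a p v)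
    (hs : ∀ t < p, s (v (t + 1)) - H.weight (a (v t)) (v (t + 1)) ≤ s (v t)) :
    0 ≤ H.seqWeight a v p := by
  obtain ⟨-, -, -, hclosed, -⟩ := hv
  simpa only [hclosed, sub_self] using sub_le_seqWeight hs

lemma IsNegativeCycle.exists_not_satisfies (h : H.IsNegativeCycle S C a) (hC : C.Finite)
    (s : V → R) : ∃ i ∈ C, ¬ H.Satisfies s i := by
  obtain ⟨hne, hmem, ha, -, hneg⟩ := h
  by_contra! hs
  have hfin : S.Finite := (hC.image H.tail).subset fun x hx => ⟨a x, ha x hx⟩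
  obtain ⟨p, v, hv, hle⟩ := exists_isCyclicSeq_of_satisfies hfin hne (fun x hx => (ha x hx).2)
    (fun x hx u hu => (hmem u).mpr ⟨a x, (ha x hx).1, Or.inr hu⟩) fun x hx => hs _ (ha x hx).1
  exact (hv.seqWeight_nonneg hle).not_gt (hneg p v hv)

/-- On the cyclic sequence, `s` is given by the partial sums of the weights. -/
lemma IsCyclicSeq.exists_extension (hv : H.IsCyclicSeq S a p v) (hw : 0 ≤ H.seqWeight a v p)
    (s₀ : V → R) :
    ∃ s : V → R, (∀ x, (∀ t < p, v t ≠ x) → s x = s₀ x) ∧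
      ∀ t < p, s (v (t + 1)) - H.weight (a (v t)) (v (t + 1)) ≤ s (v t) := by
  obtain ⟨hp, -, -, hclosed, hinj⟩ := hv
  let s := Function.extend (fun t : Fin p => v t) (fun t => H.seqWeight a v t) s₀
  have hs : ∀ t < p, s (v t) = H.seqWeight a v t := fun t ht =>
    Function.Injective.extend_apply
      (fun t t' h => Fin.ext (hinj t t.2 t' t'.2 h)) _ s₀ (⟨t, ht⟩ : Fin p)
  have hs_le : ∀ t ≤ p, s (v t) ≤ H.seqWeight a v t := by
    intro t ht
    rcases ht.lt_or_eq with ht | rfl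
    · exact (hs t ht).le
    · rw [hclosed, hs 0 hp]
      simpa [seqWeight] using hw
  refine ⟨s, fun x hx => Function.extend_apply' _ _ _ fun ⟨t, ht⟩ => hx t t.2 ht, fun t ht => ?_⟩
  rw [hs t ht, sub_le_iff_le_add]
  exact (hs_le (t + 1) ht).trans_eq (Finset.sum_range_succ _ t)

lemma Satisfies.sub_const (hs : H.Satisfies s i) (c : R) :
    H.Satisfies (fun x => s x - c) i := by
  obtain ⟨u, hu, hle⟩ := hs
  refine ⟨u, hu, ?_⟩
  rw [sub_right_comm]
  exact sub_le_sub_right hle c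

end Preorder

lemma Satisfies.inf_of_le [AddCommGroup R] [SemilatticeInf R] [IsOrderedAddMonoid R]
    (hs : H.Satisfies s₁ i) (hle : s₁ (H.tail i) ≤ s₂ (H.tail i)) :
    H.Satisfies (s₁ ⊓ s₂) i := by
  obtain ⟨u, hu, hu_le⟩ := hs
  exact ⟨u, hu, (sub_le_sub_right inf_le_left _).trans (hu_le.trans (le_inf le_rfl hle))⟩

section LinearOrder

variable [AddCommGroup R] [LinearOrder R] [IsOrderedAddMonoid R]

/-- The heads witnessing the values on `E` avoid `U \ E`, so values chosen there later do not
disturb them. -/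
lemma IsConservative.exists_extension_subset (hH : H.IsConservative) {U : Finset V}
    (hU : U.Nonempty) (ha : ∀ x ∈ U, H.tail (a x) = x) (s₀ : V → R) :
    ∃ E ⊆ U, E.Nonempty ∧ ∃ s : V → R, (∀ x ∉ E, s x = s₀ x) ∧
      ∀ x ∈ E, ∃ u ∈ H.heads (a x), (u ∈ U → u ∈ E) ∧ s u - H.weight (a x) u ≤ s x := by
  classical
  by_cases hclosed : ∀ x ∈ U, ∀ u ∈ H.heads (a x), u ∈ U
  · obtain ⟨p, v, hv, hw⟩ := hH.exists_isCyclicSeq_seqWeight_nonneg (S := U) hU.to_set ha hclosed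
    have hmem := hv.mem_of_le hclosed
    obtain ⟨s, hs₀, hs⟩ := hv.exists_extension hw s₀
    obtain ⟨hp, -, hhead, hback, -⟩ := hv
    have hmem_image : ∀ t ≤ p, v t ∈ (Finset.range p).image v := by
      intro t ht
      rcases ht.lt_or_eq with ht | rfl
      · exact Finset.mem_image_of_mem v (Finset.mem_range.mpr ht)
      · exact hback ▸ Finset.mem_image_of_mem v (Finset.mem_range.mpr hp)
    refine ⟨(Finset.range p).image v, ?_, ⟨v 0, hmem_image 0 p.zero_le⟩, s, ?_, ?_⟩
    · exact Finset.image_subset_iff.mpr fun t ht => hmem t (Finset.mem_range.mp ht).le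
    · exact fun x hx => hs₀ x fun t ht h => hx (h ▸ hmem_image t ht.le)
    · refine Finset.forall_mem_image.mpr fun t ht => ?_
      rw [Finset.mem_range] at ht
      exact ⟨v (t + 1), hhead t ht, fun _ => hmem_image (t + 1) ht, hs t ht⟩
  · push Not at hclosed
    obtain ⟨x, hx, u, hu, huU⟩ := hclosed
    have hux : u ≠ x := fun h => huU (h ▸ hx)
    refine ⟨{x}, Finset.singleton_subset_iff.mpr hx, Finset.singleton_nonempty x,
      Function.update s₀ x (s₀ u - H.weight (a x) u),
      fun y hy => Function.update_of_ne (Finset.notMem_singleton.mp hy) _ _, ?_⟩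
    intro y hy
    obtain rfl := Finset.mem_singleton.mp hy
    exact ⟨u, hu, fun h => (huU h).elim,
      by rw [Function.update_of_ne hux, Function.update_self]⟩

lemma IsConservative.exists_satisfies_extension (hH : H.IsConservative) (U : Finset V)
    (ha : ∀ x ∈ U, H.tail (a x) = x) (s₀ : V → R) :
    ∃ s : V → R, (∀ x ∉ U, s x = s₀ x) ∧ ∀ x ∈ U, H.Satisfies s (a x) := by
  classical
  induction U using Finset.strongInduction generalizing s₀ with
  | H U ih =>
  rcases U.eq_empty_or_nonempty with rfl | hU
  · exact ⟨s₀, by simp⟩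
  obtain ⟨E, hEU, hE, s₁, hs₁₀, hs₁⟩ := hH.exists_extension_subset hU ha s₀
  obtain ⟨s, hss₁, hs⟩ := ih (U \ E) (Finset.sdiff_ssubset hEU hE)
    (fun x hx => ha x (Finset.sdiff_subset hx)) s₁
  have hs_eq : ∀ x, (x ∈ U → x ∈ E) → s x = s₁ x := fun x hx => hss₁ x (by grind)
  refine ⟨s, fun x hx => ?_, fun x hx => ?_⟩
  · rw [hs_eq x fun h => (hx h).elim, hs₁₀ x fun h => hx (hEU h)]
  · by_cases hxE : x ∈ E
    · obtain ⟨u, hu, huE, hle⟩ := hs₁ x hxE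
      exact ⟨u, hu, by rwa [ha x hx, hs_eq u huE, hs_eq x fun _ => hxE]⟩
    · exact hs x (Finset.mem_sdiff.mpr ⟨hx, hxE⟩)

lemma IsConservative.exists_satisfies_of_injOn (hH : H.IsConservative) {D : Finset ι}
    (hD : Set.InjOn H.tail D) : ∃ s : V → R, ∀ i ∈ D, H.Satisfies s i := by
  classical
  rcases D.eq_empty_or_nonempty with rfl | ⟨i₀, -⟩
  · exact ⟨0, by simp⟩
  have : Nonempty ι := ⟨i₀⟩
  have ha := hD.leftInvOn_invFunOn
  obtain ⟨s, -, hs⟩ := hH.exists_satisfies_extension (a := Function.invFunOn H.tail D)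
    (D.image H.tail) (Finset.forall_mem_image.mpr fun i hi => congrArg H.tail (ha hi)) 0
  exact ⟨s, fun i hi => ha hi ▸ hs _ (Finset.mem_image_of_mem H.tail hi)⟩

lemma exists_satisfies_union {D₁ D₂ : Set ι} {x : V} (h₁ : ∀ i ∈ D₁, H.Satisfies s₁ i)
    (h₂ : ∀ i ∈ D₂, H.Satisfies s₂ i) (hx : ∀ i ∈ symmDiff D₁ D₂, H.tail i = x) :
    ∃ s : V → R, ∀ i ∈ D₁ ∪ D₂, H.Satisfies s i := by
  let r₁ : V → R := fun y => s₁ y - s₁ x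
  let r₂ : V → R := fun y => s₂ y - s₂ x
  have hr₁ : ∀ i ∈ D₁, r₁ (H.tail i) ≤ r₂ (H.tail i) → H.Satisfies (r₁ ⊓ r₂) i :=
    fun i hi hle => ((h₁ i hi).sub_const _).inf_of_le hle
  have hr₂ : ∀ i ∈ D₂, r₂ (H.tail i) ≤ r₁ (H.tail i) → H.Satisfies (r₁ ⊓ r₂) i :=
    fun i hi hle => inf_comm r₂ r₁ ▸ ((h₂ i hi).sub_const _).inf_of_le hle
  have hr_eq : ∀ i ∈ symmDiff D₁ D₂, r₁ (H.tail i) = r₂ (H.tail i) :=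
    fun i hi => by simp only [r₁, r₂, hx i hi, sub_self]
  refine ⟨r₁ ⊓ r₂, fun i hi => ?_⟩
  by_cases hi₁ : i ∈ D₁ <;> by_cases hi₂ : i ∈ D₂
  · exact (le_total (r₁ (H.tail i)) (r₂ (H.tail i))).elim (hr₁ i hi₁) (hr₂ i hi₂)
  · exact hr₁ i hi₁ (hr_eq i (Or.inl ⟨hi₁, hi₂⟩)).le
  · exact hr₂ i hi₂ (hr_eq i (Or.inr ⟨hi₂, hi₁⟩)).ge
  · exact (hi.elim hi₁ hi₂).elim

lemma IsConservative.exists_satisfies (hH : H.IsConservative) (D : Finset ι) :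
    ∃ s : V → R, ∀ i ∈ D, H.Satisfies s i := by
  classical
  induction D using Finset.strongInduction with
  | H D ih =>
  by_cases hinj : Set.InjOn H.tail D
  · exact hH.exists_satisfies_of_injOn hinj
  simp only [Set.InjOn, Finset.mem_coe] at hinj
  push Not at hinj
  obtain ⟨i, hi, j, hj, htail, hij⟩ := hinj
  obtain ⟨s₁, h₁⟩ := ih _ (Finset.erase_ssubset hi)
  obtain ⟨s₂, h₂⟩ := ih _ (Finset.erase_ssubset hj)
  have htail_eq : ∀ k ∈ symmDiff (D.erase i : Set ι) (D.erase j), H.tail k = H.tail i := by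
    intro k hk
    have : k = i ∨ k = j := by grind [SetLike.mem_coe]
    rcases this with rfl | rfl
    exacts [rfl, htail.symm]
  obtain ⟨s, hs⟩ := exists_satisfies_union h₁ h₂ htail_eq
  exact ⟨s, fun k hk => hs k (by grind [SetLike.mem_coe])⟩

end LinearOrder

end HyTN

theorem stmt_8_general {V ι R : Type*} [Finite ι] [AddCommGroup R] [LinearOrder R]
    [IsOrderedAddMonoid R] (H : HyTN V ι R) :
    (∃ s : V → R, ∀ i, H.Satisfies s i) ↔ H.IsConservative := by
  constructor
  · rintro ⟨s, hs⟩ ⟨S, C, a, hneg⟩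
    obtain ⟨i, -, hi⟩ := hneg.exists_not_satisfies C.toFinite s
    exact hi (hs i)
  · intro hH
    cases nonempty_fintype ι
    simpa only [Finset.mem_univ, true_imp_iff] using hH.exists_satisfies Finset.univ

/-- A multi-head HyTN `H = (V, A)` with integer weights (hyperarcs indexed by
`ι`, each with tail `tail i`, nonempty head set `heads i` not containing the
tail, and weights `w i`), in which every node is the tail of at least one
hyperarc, admits an integral feasible scheduling `s : V → ℤ` (with
`s (tail i) ≥ min_{u ∈ heads i} (s u - w i u)` for all `i`) iff it is
conservative, i.e. contains no negative cycle (a cycle being a pair `(S, C)`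
with tail-selection function `a`, `S` nonempty and equal to the union of
`{tail i} ∪ heads i` over `i ∈ C`, every `v ∈ S` the tail of exactly one
`a v ∈ C`; negative when every finite cyclic sequence in it has total weight
`< 0`). -/
theorem stmt_8 {V ι : Type*} [Fintype V] [Fintype ι]
    (tail : ι → V) (heads : ι → Finset V) (w : ι → V → ℤ)
    (hne : ∀ i, (heads i).Nonempty) (hnt : ∀ i, tail i ∉ heads i)
    (htail : ∀ v : V, ∃ i, tail i = v) :
    (∃ s : V → ℤ, ∀ i, (heads i).inf' (hne i) (fun u => s u - w i u) ≤ s (tail i)) ↔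
    ¬ ∃ (S : Set V) (C : Set ι) (a : V → ι),
      S.Nonempty ∧
      (∀ v : V, v ∈ S ↔ ∃ i ∈ C, v = tail i ∨ v ∈ heads i) ∧
      (∀ v ∈ S, a v ∈ C ∧ tail (a v) = v) ∧
      (∀ i ∈ C, a (tail i) = i) ∧
      (∀ (p : ℕ) (v : ℕ → V), 1 ≤ p → v 0 ∈ S →
        (∀ t < p, v (t + 1) ∈ heads (a (v t))) → v p = v 0 →
        (∀ t < p, ∀ t' < p, v t = v t' → t = t') →
        ∑ t ∈ Finset.range p, w (a (v t)) (v (t + 1)) < 0) := by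
  simpa only [HyTN.Satisfies, HyTN.IsConservative, HyTN.IsNegativeCycle, HyTN.IsCyclicSeq,
    HyTN.seqWeight, Finset.inf'_le_iff, and_imp] using stmt_8_general ⟨tail, heads, w⟩
end
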